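/- For every integer r ≥ 3 and all γ > 0, η > 0 there exist β > 0 and m₀ such that the following holds. Let G be an r-partite graph with vertex classes V₁,…,V_r, each of size m or m+1 with m ≥ m₀, let v₁v₂ be an edge of G between V₁ and V₂, let 𝒦 be a family of copies of K_r in G each containing the edge v₁v₂, and write |𝒦| = δ·m^{r−2}. Let (p_{ij})_{i≠j∈[r]} be probabilities in (0,1] such that δ·m^{r−2}·∏_{{k,ℓ} ∈ ([r] choose 2), {k,ℓ} ≠ {1,2}} p_{kℓ} ≥ (m+1)^{r−3+γ}, and let G_{(p_{ij})} be the random subgraph of G in which each edge between V_i and V_j is retained independently with probability p_{ij}. Then the probability that the number of copies K ∈ 𝒦 with E(K)∖{v₁v₂} ⊆ E(G_{(p_{ij})}) does not lie in the interval [(1−η)·(∏_{{k,ℓ} ≠ {1,2}} p_{kℓ})·δ·m^{r−2}, (1+η)·(∏_{{k,ℓ} ≠ {1,2}} p_{kℓ})·δ·m^{r−2}] is at most exp(−m^β). -/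

import Mathlib

namespace RainbowDecomp

variable {V : Type*} {W : Type*}

/-- The number of edges of a graph. -/
noncomputable def eCount (G : SimpleGraph V) : ℕ := G.edgeSet.ncard

/-- `χ` is a proper edge coloring of `G`: any two distinct edges of `G` sharing a vertex
receive distinct colors. -/
def ProperEdgeColoring (G : SimpleGraph V) (χ : Sym2 V → ℕ) : Prop :=
  ∀ ⦃e f : Sym2 V⦄, e ∈ G.edgeSet → f ∈ G.edgeSet → e ≠ f →
    (∃ v, v ∈ e ∧ v ∈ f) → χ e ≠ χ f

/-- `S` is the edge set of a (sub)copy of `H` in `G`. -/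
def IsCopyEdgeSet (H : SimpleGraph W) (G : SimpleGraph V) (S : Set (Sym2 V)) : Prop :=
  ∃ f : W → V, Function.Injective f ∧ (∀ ⦃a b⦄, H.Adj a b → G.Adj (f a) (f b)) ∧
    S = Sym2.map f '' H.edgeSet

/-- `G` contains a subgraph isomorphic to `H`. -/
def ContainsCopy (H : SimpleGraph W) (G : SimpleGraph V) : Prop :=
  ∃ f : W → V, Function.Injective f ∧ ∀ ⦃a b⦄, H.Adj a b → G.Adj (f a) (f b)

/-- `P` is a partition of the edge set of `G` into `t` (nonempty) parts. -/
def IsEdgePartition (G : SimpleGraph V) {t : ℕ} (P : Fin t → Set (Sym2 V)) : Prop :=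
  (∀ i, P i ⊆ G.edgeSet) ∧ ∀ e ∈ G.edgeSet, ∃! i, e ∈ P i

/-- `P` is an `H`-decomposition of `G`: every part is a single edge or the edge set of a
copy of `H`. -/
def IsHDecomp (G : SimpleGraph V) (H : SimpleGraph W) {t : ℕ}
    (P : Fin t → Set (Sym2 V)) : Prop :=
  IsEdgePartition G P ∧ ∀ i, (∃ e, P i = {e}) ∨ IsCopyEdgeSet H G (P i)

/-- `P` is a rainbow `H`-decomposition of `G` under `χ`: every part is a single edge or
the edge set of a rainbow copy of `H`. -/
def IsRainbowHDecomp (G : SimpleGraph V) (H : SimpleGraph W) (χ : Sym2 V → ℕ) {t : ℕ}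
    (P : Fin t → Set (Sym2 V)) : Prop :=
  IsEdgePartition G P ∧
    ∀ i, (∃ e, P i = {e}) ∨ (IsCopyEdgeSet H G (P i) ∧ Set.InjOn χ (P i))

/-- `φ(G,H)`, the minimum number of parts in an `H`-decomposition of `G`. -/
noncomputable def phi (G : SimpleGraph V) (H : SimpleGraph W) : ℕ :=
  sInf {t | ∃ P : Fin t → Set (Sym2 V), IsHDecomp G H P}

/-- `φ_χ^R(G,H)`, the minimum number of parts in a rainbow `H`-decomposition of `G`
under `χ`. -/
noncomputable def phiR (G : SimpleGraph V) (H : SimpleGraph W) (χ : Sym2 V → ℕ) : ℕ :=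
  sInf {t | ∃ P : Fin t → Set (Sym2 V), IsRainbowHDecomp G H χ P}

/-- `N(G,H)`, the maximum number of pairwise edge-disjoint copies of `H` in `G`. -/
noncomputable def Ncopies (G : SimpleGraph V) (H : SimpleGraph W) : ℕ :=
  sSup {k | ∃ C : Fin k → Set (Sym2 V), (∀ i, IsCopyEdgeSet H G (C i)) ∧
    ∀ i j, i ≠ j → Disjoint (C i) (C j)}

/-- `N_χ^R(G,H)`, the maximum number of pairwise edge-disjoint rainbow copies of `H`
in `G` under `χ`. -/
noncomputable def NcopiesR (G : SimpleGraph V) (H : SimpleGraph W) (χ : Sym2 V → ℕ) : ℕ :=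
  sSup {k | ∃ C : Fin k → Set (Sym2 V),
    (∀ i, IsCopyEdgeSet H G (C i) ∧ Set.InjOn χ (C i)) ∧
    ∀ i j, i ≠ j → Disjoint (C i) (C j)}

/-- `ex(n,H)`, the maximum number of edges of an `H`-free graph on `n` vertices. -/
noncomputable def exNum (n : ℕ) (H : SimpleGraph W) : ℕ :=
  sSup {m | ∃ G : SimpleGraph (Fin n), ¬ ContainsCopy H G ∧ eCount G = m}

/-- `φ^R(n,H)`, the maximum of `φ_χ^R(G,H)` over all graphs `G` on `n` vertices and all
proper edge colorings `χ` of `G`. -/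
noncomputable def phiRmax (n : ℕ) (H : SimpleGraph W) : ℕ :=
  sSup {t | ∃ G : SimpleGraph (Fin n), ∃ χ : Sym2 (Fin n) → ℕ,
    ProperEdgeColoring G χ ∧ phiR G H χ = t}

/-- `e(A)`, the number of edges of `G` with both endpoints in `A`. -/
noncomputable def eInside (G : SimpleGraph V) (A : Set V) : ℕ :=
  {e ∈ G.edgeSet | ∀ v ∈ e, v ∈ A}.ncard

/-- `e(A,B)`, the number of edges of `G` with one endpoint in `A` and one in `B`
(counted as ordered pairs). -/
noncomputable def eBetween (G : SimpleGraph V) (A B : Set V) : ℕ :=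
  {p : V × V | p.1 ∈ A ∧ p.2 ∈ B ∧ G.Adj p.1 p.2}.ncard

/-- The edge density `d(A,B)` between `A` and `B`. -/
noncomputable def density (G : SimpleGraph V) (A B : Set V) : ℝ :=
  (eBetween G A B : ℝ) / ((A.ncard : ℝ) * (B.ncard : ℝ))

/-- The pair `(A,B)` is `ε`-regular in `G`. -/
def IsRegularPair (G : SimpleGraph V) (ε : ℝ) (A B : Set V) : Prop :=
  ∀ A' ⊆ A, ∀ B' ⊆ B, ε * (A.ncard : ℝ) ≤ (A'.ncard : ℝ) →
    ε * (B.ncard : ℝ) ≤ (B'.ncard : ℝ) →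
    |density G A' B' - density G A B| ≤ ε

/-- The edges of the (transversal) clique with vertices `g 0, …, g (r-1)`. -/
def transversalEdges {r : ℕ} (g : Fin r → V) : Set (Sym2 V) :=
  {e | ∃ k l : Fin r, k ≠ l ∧ e = s(g k, g l)}

/-- The number of rainbow transversal copies of `K_r` (one vertex in each `Vs l`)
containing the edge `uv` with `u ∈ Vs i` and `v ∈ Vs j`. -/
noncomputable def rainbowCliqueCount {r : ℕ} (G : SimpleGraph V) (χ : Sym2 V → ℕ)
    (Vs : Fin r → Set V) (i j : Fin r) (u v : V) : ℕ :=
  {g : Fin r → V | (∀ l, g l ∈ Vs l) ∧ (∀ k l, k ≠ l → G.Adj (g k) (g l)) ∧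
    g i = u ∧ g j = v ∧ Set.InjOn χ (transversalEdges g)}.ncard

/-- The number of non-rainbow transversal copies of `K_r` (one vertex in each `Vs l`)
containing the edge `uv` with `u ∈ Vs i` and `v ∈ Vs j`. -/
noncomputable def nonRainbowCliqueCount {r : ℕ} (G : SimpleGraph V) (χ : Sym2 V → ℕ)
    (Vs : Fin r → Set V) (i j : Fin r) (u v : V) : ℕ :=
  {g : Fin r → V | (∀ l, g l ∈ Vs l) ∧ (∀ k l, k ≠ l → G.Adj (g k) (g l)) ∧
    g i = u ∧ g j = v ∧ ¬ Set.InjOn χ (transversalEdges g)}.ncard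

/-- The edge set of the clique on the vertex set `K`. -/
def cliqueEdges (K : Finset V) : Set (Sym2 V) :=
  {e | ∃ u ∈ K, ∃ v ∈ K, u ≠ v ∧ e = s(u, v)}

open scoped Classical in
/-- The probability of the event `A` under the random subgraph of `G` in which every
edge `e` is retained independently with probability `q e`. -/
noncomputable def edgeSubsetProb [Fintype V] (G : SimpleGraph V) (q : Sym2 V → ℝ)
    (A : Set (Finset (Sym2 V))) : ℝ :=
  ∑ E' ∈ (Set.toFinite G.edgeSet).toFinset.powerset,
    (∏ e ∈ E', q e) * (∏ e ∈ (Set.toFinite G.edgeSet).toFinset \ E', (1 - q e)) *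
      A.indicator (fun _ => (1 : ℝ)) E'

section BernoulliExpectation

variable {α ι : Type*} [DecidableEq α]

/-- The expectation of `f` on the random subset of `S` in which every `e ∈ S` is retained
independently with probability `q e`. -/
noncomputable def bernoulliExp (S : Finset α) (q : α → ℝ) (f : Finset α → ℝ) : ℝ :=
  ∑ E ∈ S.powerset, (∏ e ∈ E, q e) * (∏ e ∈ S \ E, (1 - q e)) * f E

theorem bernoulliExp_mono {S : Finset α} {q : α → ℝ} (hq : ∀ e ∈ S, 0 ≤ q e ∧ q e ≤ 1)
    {f g : Finset α → ℝ} (hfg : ∀ E, f E ≤ g E) : bernoulliExp S q f ≤ bernoulliExp S q g := by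
  refine Finset.sum_le_sum fun E hE => mul_le_mul_of_nonneg_left (hfg E) (mul_nonneg ?_ ?_)
  · exact Finset.prod_nonneg fun e he => (hq e (Finset.mem_powerset.1 hE he)).1
  · exact Finset.prod_nonneg fun e he => by
      linarith [(hq e (Finset.mem_sdiff.1 he).1).2]

theorem bernoulliExp_const_mul (S : Finset α) (q : α → ℝ) (c : ℝ) (f : Finset α → ℝ) :
    bernoulliExp S q (fun E => c * f E) = c * bernoulliExp S q f := by
  simp only [bernoulliExp, Finset.mul_sum]
  exact Finset.sum_congr rfl fun E _ => by ring

theorem bernoulliExp_add (S : Finset α) (q : α → ℝ) (f g : Finset α → ℝ) :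
    bernoulliExp S q (fun E => f E + g E) = bernoulliExp S q f + bernoulliExp S q g := by
  simp only [bernoulliExp, mul_add, Finset.sum_add_distrib]

theorem bernoulliExp_sum (S : Finset α) (q : α → ℝ) (T : Finset ι) (f : ι → Finset α → ℝ) :
    bernoulliExp S q (fun E => ∑ i ∈ T, f i E) = ∑ i ∈ T, bernoulliExp S q (f i) := by
  simp only [bernoulliExp, Finset.mul_sum]
  exact Finset.sum_comm

theorem bernoulliExp_subset {S A : Finset α} (hA : A ⊆ S) (q : α → ℝ) :
    bernoulliExp S q (fun E => if A ⊆ E then 1 else 0) = ∏ e ∈ A, q e := by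
  have h := Finset.prod_add q (fun e => if e ∈ A then 0 else 1 - q e) S
  have h₁ : ∏ e ∈ S, (q e + if e ∈ A then 0 else 1 - q e) = ∏ e ∈ A, q e := by
    rw [← Finset.prod_subset hA (f := fun e => q e + if e ∈ A then 0 else 1 - q e)]
    · exact Finset.prod_congr rfl fun e he => by simp [he]
    · intro e _ he
      simp [he]
  rw [← h₁, h]
  refine Finset.sum_congr rfl fun E _ => ?_
  rw [mul_assoc]
  congr 1
  beta_reduce
  split_ifs with hE
  · rw [mul_one]
    refine Finset.prod_congr rfl fun e he => ?_
    rw [if_neg fun h => (Finset.mem_sdiff.1 he).2 (hE h)]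
  · obtain ⟨e, heA, heE⟩ := Finset.not_subset.1 hE
    rw [mul_zero, Finset.prod_eq_zero (Finset.mem_sdiff.2 ⟨hA heA, heE⟩) (by simp [heA])]

/-- Events `A i ⊆ E` with pairwise disjoint `A i` are independent. -/
theorem bernoulliExp_prod_one_add {S : Finset α} (q : α → ℝ) (T : Finset ι) (A : ι → Finset α)
    (hA : ∀ i ∈ T, A i ⊆ S) (hdisj : (T : Set ι).PairwiseDisjoint A) (t : ℝ) :
    bernoulliExp S q (fun E => ∏ i ∈ T, (1 + t * if A i ⊆ E then 1 else 0)) =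
      ∏ i ∈ T, (1 + t * ∏ e ∈ A i, q e) := by
  classical
  simp only [Finset.prod_one_add]
  rw [bernoulliExp_sum]
  refine Finset.sum_congr rfl fun U hU => ?_
  have hUT := Finset.mem_powerset.1 hU
  have hfun : (fun E : Finset α => ∏ i ∈ U, t * (if A i ⊆ E then (1 : ℝ) else 0)) =
      fun E => t ^ U.card * if U.biUnion A ⊆ E then 1 else 0 := by
    funext E
    rw [Finset.prod_mul_distrib, Finset.prod_const, Finset.prod_ite_zero]
    simp only [Finset.prod_const_one, Finset.biUnion_subset]
  rw [hfun, bernoulliExp_const_mul,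
    bernoulliExp_subset (Finset.biUnion_subset.2 fun i hi => hA i (hUT hi)),
    Finset.prod_biUnion (hdisj.subset (Finset.coe_subset.2 hUT)), Finset.prod_mul_distrib,
    Finset.prod_const]

theorem bernoulliExp_exp_count_le {S : Finset α} {q : α → ℝ}
    (hq : ∀ e ∈ S, 0 ≤ q e ∧ q e ≤ 1) (T : Finset ι) (A : ι → Finset α)
    (hA : ∀ i ∈ T, A i ⊆ S) (hdisj : (T : Set ι).PairwiseDisjoint A) {P : ℝ}
    (hP : ∀ i ∈ T, ∏ e ∈ A i, q e = P) (u : ℝ) :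
    bernoulliExp S q (fun E => Real.exp (u * ({i ∈ T | A i ⊆ E}.card : ℝ))) ≤
      Real.exp (T.card * P * (Real.exp u - 1)) := by
  have hfun : (fun E : Finset α => Real.exp (u * ({i ∈ T | A i ⊆ E}.card : ℝ))) =
      fun E => ∏ i ∈ T, (1 + (Real.exp u - 1) * if A i ⊆ E then 1 else 0) := by
    funext E
    rw [Finset.card_filter, Nat.cast_sum, Finset.mul_sum, Real.exp_sum]
    refine Finset.prod_congr rfl fun i _ => ?_
    split_ifs <;> simp
  rw [hfun, bernoulliExp_prod_one_add q T A hA hdisj]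
  have h : Real.exp (T.card * P * (Real.exp u - 1)) =
      ∏ i ∈ T, Real.exp ((Real.exp u - 1) * ∏ e ∈ A i, q e) := by
    rw [← Real.exp_sum, Finset.sum_congr rfl fun i hi => by rw [hP i hi], Finset.sum_const,
      nsmul_eq_mul]
    ring_nf
  rw [h]
  refine Finset.prod_le_prod (fun i hi => ?_) fun i _ => ?_
  · have h0 : 0 ≤ ∏ e ∈ A i, q e := Finset.prod_nonneg fun e he => (hq e (hA i hi he)).1
    have h1 : ∏ e ∈ A i, q e ≤ 1 :=
      Finset.prod_le_one (fun e he => (hq e (hA i hi he)).1) fun e he => (hq e (hA i hi he)).2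
    nlinarith [mul_nonneg (Real.exp_pos u).le h0]
  · linarith [Real.add_one_le_exp ((Real.exp u - 1) * ∏ e ∈ A i, q e)]

/-- Moment bound for the number of events `A i ⊆ E` that occur, when the index set splits into
`D` classes of mutually independent events. -/
theorem bernoulliExp_exp_count_coloring_le_one {S : Finset α} {q : α → ℝ}
    (hq : ∀ e ∈ S, 0 ≤ q e ∧ q e ≤ 1) (T : Finset ι) (A : ι → Finset α)
    (hA : ∀ i ∈ T, A i ⊆ S) {P : ℝ} (hP : ∀ i ∈ T, ∏ e ∈ A i, q e = P) {D : ℕ} (hD : 0 < D)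
    (c : ι → ℕ) (hc : ∀ i ∈ T, c i < D)
    (hdisj : ∀ i ∈ T, ∀ j ∈ T, i ≠ j → c i = c j → Disjoint (A i) (A j)) (u : ℝ) :
    bernoulliExp S q (fun E => Real.exp ((u * ({i ∈ T | A i ⊆ E}.card : ℝ) -
      T.card * P * (Real.exp u - 1)) / D)) ≤ 1 := by
  have hD' : (0 : ℝ) < D := by exact_mod_cast hD
  have hmaps : ∀ i ∈ T, c i ∈ Finset.range D := fun i hi => Finset.mem_range.2 (hc i hi)
  have hcls : ∀ k ∈ Finset.range D, bernoulliExp S q (fun E => (D : ℝ)⁻¹ * Real.exp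
      (u * ({i ∈ {i ∈ T | c i = k} | A i ⊆ E}.card : ℝ) -
        ({i ∈ T | c i = k}.card : ℝ) * P * (Real.exp u - 1))) ≤ (D : ℝ)⁻¹ := by
    intro k _
    have hmem : ∀ i ∈ ({i ∈ T | c i = k} : Finset ι), i ∈ T := fun i hi =>
      (Finset.mem_filter.1 hi).1
    have h := bernoulliExp_exp_count_le hq {i ∈ T | c i = k} A (fun i hi => hA i (hmem i hi))
      (fun i hi j hj hij => hdisj i (hmem i hi) j (hmem j hj) hij
        ((Finset.mem_filter.1 hi).2.trans (Finset.mem_filter.1 hj).2.symm))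
      (fun i hi => hP i (hmem i hi)) u
    simp only [sub_eq_add_neg, Real.exp_add]
    simp only [mul_comm (Real.exp (u * _)), bernoulliExp_const_mul]
    refine mul_le_of_le_one_right (by positivity) ?_
    refine (mul_le_mul_of_nonneg_left h (Real.exp_pos _).le).trans ?_
    rw [← Real.exp_add]
    simp [sub_eq_add_neg]
  have hpt : ∀ E : Finset α, Real.exp ((u * ({i ∈ T | A i ⊆ E}.card : ℝ) -
      T.card * P * (Real.exp u - 1)) / D) ≤ ∑ k ∈ Finset.range D, (D : ℝ)⁻¹ * Real.exp
      (u * ({i ∈ {i ∈ T | c i = k} | A i ⊆ E}.card : ℝ) -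
        ({i ∈ T | c i = k}.card : ℝ) * P * (Real.exp u - 1)) := by
    intro E
    have hj := convexOn_exp.map_sum_le (t := Finset.range D) (w := fun _ => (D : ℝ)⁻¹)
      (p := fun k => u * ({i ∈ {i ∈ T | c i = k} | A i ⊆ E}.card : ℝ) -
        ({i ∈ T | c i = k}.card : ℝ) * P * (Real.exp u - 1))
      (fun _ _ => by positivity) (by simp [hD'.ne']) (fun _ _ => Set.mem_univ _)
    refine le_trans (le_of_eq ?_) hj
    congr 1
    have h1 : (T.card : ℝ) = ∑ k ∈ Finset.range D, ({i ∈ T | c i = k}.card : ℝ) := by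
      exact_mod_cast Finset.card_eq_sum_card_fiberwise hmaps
    have h2 : (({i ∈ T | A i ⊆ E}).card : ℝ) =
        ∑ k ∈ Finset.range D, ({i ∈ {i ∈ T | c i = k} | A i ⊆ E}.card : ℝ) := by
      simp only [Finset.filter_comm (fun i => c i = _)]
      exact_mod_cast Finset.card_eq_sum_card_fiberwise
        (s := {i ∈ T | A i ⊆ E}) fun i hi => hmaps i (Finset.mem_filter.1 hi).1
    simp only [smul_eq_mul]
    rw [← Finset.mul_sum, Finset.sum_sub_distrib, ← Finset.mul_sum, ← Finset.sum_mul,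
      ← Finset.sum_mul, ← h1, ← h2, div_eq_inv_mul]
  calc _ ≤ _ := bernoulliExp_mono hq hpt
    _ = _ := bernoulliExp_sum _ _ _ _
    _ ≤ ∑ k ∈ Finset.range D, (D : ℝ)⁻¹ := Finset.sum_le_sum hcls
    _ = 1 := by simp [hD'.ne']

/-- Two-sided tail bound for the number of events `A i ⊆ E` that occur, when the index set splits
into `D` classes of mutually independent events. -/
theorem bernoulliExp_deviation_le {S : Finset α} {q : α → ℝ}
    (hq : ∀ e ∈ S, 0 ≤ q e ∧ q e ≤ 1) (T : Finset ι) (A : ι → Finset α)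
    (hA : ∀ i ∈ T, A i ⊆ S) {P : ℝ} (hP0 : 0 ≤ P) (hP : ∀ i ∈ T, ∏ e ∈ A i, q e = P)
    {D : ℕ} (hD : 0 < D) (c : ι → ℕ) (hc : ∀ i ∈ T, c i < D)
    (hdisj : ∀ i ∈ T, ∀ j ∈ T, i ≠ j → c i = c j → Disjoint (A i) (A j))
    {η u : ℝ} (hu0 : 0 ≤ u) (hu1 : u ≤ 1) (B : Set (Finset α))
    (hB : ∀ E ∈ B, ({i ∈ T | A i ⊆ E}.card : ℝ) ≤ (1 - η) * (T.card * P) ∨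
      (1 + η) * (T.card * P) ≤ ({i ∈ T | A i ⊆ E}.card : ℝ)) :
    bernoulliExp S q (B.indicator fun _ => 1) ≤
      2 * Real.exp (-(T.card * P / D * (u * (η - u)))) := by
  have hD' : (0 : ℝ) < D := by exact_mod_cast hD
  set μ : ℝ := T.card * P with hμ
  have hμ0 : 0 ≤ μ := by positivity
  set b : ℝ := μ / D * (u * (η - u)) with hb
  have hquad : ∀ s : ℝ, |s| = u → Real.exp s - 1 ≤ s + u ^ 2 := fun s hs => by
    have h := (abs_le.1 (Real.abs_exp_sub_one_sub_id_le (hs.trans_le hu1))).2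
    rw [← sq_abs s, hs] at h
    linarith
  set F : ℝ → Finset α → ℝ := fun s E =>
    Real.exp ((s * ({i ∈ T | A i ⊆ E}.card : ℝ) - μ * (Real.exp s - 1)) / D) with hF
  have hkey : ∀ s E, |s| = u → s * μ + u * η * μ ≤ s * ({i ∈ T | A i ⊆ E}.card : ℝ) →
      1 ≤ Real.exp (-b) * F s E := by
    intro s E hs h
    rw [hF, ← Real.exp_add, Real.one_le_exp_iff, hb,
      show -(μ / D * (u * (η - u))) + (s * (({i ∈ T | A i ⊆ E}).card : ℝ) -
        μ * (Real.exp s - 1)) / D = (-(μ * (u * (η - u))) + (s * (({i ∈ T | A i ⊆ E}).card : ℝ) -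
        μ * (Real.exp s - 1))) / D by ring]
    refine div_nonneg ?_ hD'.le
    nlinarith [mul_le_mul_of_nonneg_left (hquad s hs) hμ0]
  have hle : bernoulliExp S q (B.indicator fun _ => 1) ≤
      bernoulliExp S q (fun E => Real.exp (-b) * (F (-u) E + F u E)) := by
    refine bernoulliExp_mono hq fun E => ?_
    have hpos : ∀ s, 0 ≤ Real.exp (-b) * F s E := fun s => by positivity
    by_cases hE : E ∈ B
    · rw [Set.indicator_of_mem hE, mul_add]
      rcases hB E hE with h | h
      · have := hkey (-u) E (by rw [abs_neg, abs_of_nonneg hu0]) (by nlinarith)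
        linarith [hpos u]
      · have := hkey u E (abs_of_nonneg hu0) (by nlinarith)
        linarith [hpos (-u)]
    · rw [Set.indicator_of_notMem hE, mul_add]
      linarith [hpos u, hpos (-u)]
  have hmom : ∀ s, bernoulliExp S q (F s) ≤ 1 := fun s =>
    bernoulliExp_exp_count_coloring_le_one hq T A hA hP hD c hc hdisj s
  refine hle.trans ?_
  rw [bernoulliExp_const_mul, bernoulliExp_add, mul_comm (2 : ℝ)]
  exact mul_le_mul_of_nonneg_left (by linarith [hmom u, hmom (-u)]) (Real.exp_pos _).le

end BernoulliExpectation

/-- Greedy coloring: if every element of `T` conflicts with fewer than `D` elements of `T`, then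
`D` colors suffice. -/
theorem exists_greedy_coloring {ι : Type*} (R : ι → ι → Prop) [DecidableRel R]
    (hR : ∀ i j, R i j → R j i) (D : ℕ) (T : Finset ι)
    (hT : ∀ i ∈ T, {j ∈ T | R i j}.card < D) :
    ∃ c : ι → ℕ, (∀ i ∈ T, c i < D) ∧ ∀ i ∈ T, ∀ j ∈ T, i ≠ j → c i = c j → ¬ R i j := by
  classical
  induction T using Finset.induction_on with
  | empty => exact ⟨fun _ => 0, by simp, by simp⟩
  | insert a T ha ih =>
    obtain ⟨c, hc, hcR⟩ := ih fun i hi =>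
      (Finset.card_le_card (Finset.filter_subset_filter _ (Finset.subset_insert a T))).trans_lt
        (hT i (Finset.mem_insert_of_mem hi))
    have hcard : (({j ∈ T | R a j}).image c).card < (Finset.range D).card := by
      rw [Finset.card_range]
      exact Finset.card_image_le.trans_lt ((Finset.card_le_card
        (Finset.filter_subset_filter _ (Finset.subset_insert a T))).trans_lt
          (hT a (Finset.mem_insert_self a T)))
    obtain ⟨k, hk, hk'⟩ := Finset.exists_mem_notMem_of_card_lt_card hcard
    have hne : ∀ j ∈ T, j ≠ a := fun j hj h => ha (h ▸ hj)
    have hkR : ∀ j ∈ T, k = c j → ¬ R a j := fun j hj h hr =>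
      hk' (Finset.mem_image.2 ⟨j, Finset.mem_filter.2 ⟨hj, hr⟩, h.symm⟩)
    refine ⟨Function.update c a k, fun i hi => ?_, fun i hi j hj hij hcij => ?_⟩
    · rcases Finset.mem_insert.1 hi with rfl | hiT
      · simpa using hk
      · rw [Function.update_of_ne (hne i hiT)]
        exact hc i hiT
    · rcases Finset.mem_insert.1 hi with rfl | hiT <;> rcases Finset.mem_insert.1 hj with rfl | hjT
      · exact absurd rfl hij
      · rw [Function.update_self, Function.update_of_ne (hne j hjT)] at hcij
        exact hkR j hjT hcij
      · rw [Function.update_self, Function.update_of_ne (hne i hiT)] at hcij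
        exact fun h => hkR i hiT hcij.symm (hR _ _ h)
      · rw [Function.update_of_ne (hne i hiT), Function.update_of_ne (hne j hjT)] at hcij
        exact hcR i hiT j hjT hij hcij

/-- Among the `r`-sets containing two fixed vertices, few meet a given one elsewhere. -/
theorem card_meeting_elsewhere_lt {V : Type*} [Fintype V] [DecidableEq V] {r n : ℕ} (hr : 3 ≤ r)
    (hn : 0 < n) (hV : Fintype.card V ≤ n) {v₁ v₂ : V} (hv : v₁ ≠ v₂) (𝒦 : Finset (Finset V))
    (h𝒦 : ∀ K ∈ 𝒦, K.card = r ∧ v₁ ∈ K ∧ v₂ ∈ K) (K : Finset V) (hK : K ∈ 𝒦) :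
    {K' ∈ 𝒦 | ∃ x ∈ K, x ∈ K' ∧ x ≠ v₁ ∧ x ≠ v₂}.card < r * n ^ (r - 3) := by
  have hcard3 : ∀ x, x ≠ v₁ → x ≠ v₂ → ({x, v₁, v₂} : Finset V).card = 3 := fun x h1 h2 =>
    Finset.card_eq_three.2 ⟨x, v₁, v₂, h1, h2, hv, rfl⟩
  have hone : ∀ x, x ≠ v₁ → x ≠ v₂ → {K' ∈ 𝒦 | x ∈ K'}.card ≤ n ^ (r - 3) := by
    intro x h1 h2
    calc {K' ∈ 𝒦 | x ∈ K'}.card ≤ ((Finset.univ : Finset V).powersetCard (r - 3)).card := by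
          refine Finset.card_le_card_of_injOn (fun K' => K' \ {x, v₁, v₂}) ?_ ?_
          · intro K' hK'
            obtain ⟨hK', hx⟩ := Finset.mem_filter.1 hK'
            obtain ⟨hc, ha, hb⟩ := h𝒦 K' hK'
            refine Finset.mem_coe.2 (Finset.mem_powersetCard.2 ⟨Finset.subset_univ _, ?_⟩)
            rw [Finset.card_sdiff_of_subset (by grind), hc, hcard3 x h1 h2]
          · intro K₁ hK₁ K₂ hK₂ h
            obtain ⟨hK₁, hx₁⟩ := Finset.mem_filter.1 hK₁
            obtain ⟨hK₂, hx₂⟩ := Finset.mem_filter.1 hK₂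
            have hs₁ : {x, v₁, v₂} ⊆ K₁ := by grind
            have hs₂ : {x, v₁, v₂} ⊆ K₂ := by grind
            rw [← Finset.sdiff_union_of_subset hs₁, ← Finset.sdiff_union_of_subset hs₂]
            exact congrArg (· ∪ _) h
      _ = (Fintype.card V).choose (r - 3) := by rw [Finset.card_powersetCard, Finset.card_univ]
      _ ≤ Fintype.card V ^ (r - 3) := Nat.choose_le_pow _ _
      _ ≤ n ^ (r - 3) := Nat.pow_le_pow_left hV _
  obtain ⟨hKr, h1, h2⟩ := h𝒦 K hK
  have hsub : {K' ∈ 𝒦 | ∃ x ∈ K, x ∈ K' ∧ x ≠ v₁ ∧ x ≠ v₂} ⊆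
      (K \ {v₁, v₂}).biUnion fun x => {K' ∈ 𝒦 | x ∈ K'} := by
    intro K' hK'
    simp only [Finset.mem_filter, Finset.mem_biUnion, Finset.mem_sdiff, Finset.mem_insert,
      Finset.mem_singleton] at hK' ⊢
    obtain ⟨hK', x, hx, hx', hx1, hx2⟩ := hK'
    exact ⟨x, ⟨hx, by tauto⟩, hK', hx'⟩
  calc _ ≤ _ := Finset.card_le_card hsub
    _ ≤ (K \ {v₁, v₂}).card * n ^ (r - 3) := Finset.card_biUnion_le_card_mul _ _ _ fun x hx => by
        simp only [Finset.mem_sdiff, Finset.mem_insert, Finset.mem_singleton, not_or] at hx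
        exact hone x hx.2.1 hx.2.2
    _ < r * n ^ (r - 3) := by
        refine Nat.mul_lt_mul_of_pos_right ?_ (by positivity)
        rw [Finset.card_sdiff_of_subset (by grind), hKr, Finset.card_pair hv]
        omega

/-- The edges of the clique on `K` other than `e₀`, as a finset. -/
def cliqueEdgesErase {V : Type*} [DecidableEq V] (K : Finset V) (e₀ : Sym2 V) : Finset (Sym2 V) :=
  {e ∈ K.sym2 | ¬ e.IsDiag ∧ e ≠ e₀}

theorem mk_mem_cliqueEdgesErase {V : Type*} [DecidableEq V] {K : Finset V} {e₀ : Sym2 V}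
    {u v : V} : s(u, v) ∈ cliqueEdgesErase K e₀ ↔ (u ∈ K ∧ v ∈ K) ∧ u ≠ v ∧ s(u, v) ≠ e₀ := by
  simp [cliqueEdgesErase]

theorem coe_cliqueEdgesErase {V : Type*} [DecidableEq V] (K : Finset V) (e₀ : Sym2 V) :
    (cliqueEdgesErase K e₀ : Set (Sym2 V)) = cliqueEdges K \ {e₀} := by
  ext e
  induction e with | _ u v =>
  rw [Finset.mem_coe, mk_mem_cliqueEdgesErase, Set.mem_sdiff, Set.mem_singleton_iff]
  constructor
  · rintro ⟨⟨hu, hv⟩, huv, he⟩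
    exact ⟨⟨u, hu, v, hv, huv, rfl⟩, he⟩
  · rintro ⟨⟨a, ha, b, hb, hab, h⟩, he⟩
    rcases Sym2.eq_iff.1 h with ⟨rfl, rfl⟩ | ⟨rfl, rfl⟩
    · exact ⟨⟨ha, hb⟩, hab, he⟩
    · exact ⟨⟨hb, ha⟩, hab.symm, he⟩

theorem disjoint_cliqueEdgesErase {V : Type*} [DecidableEq V] {K K' : Finset V} {v₁ v₂ : V}
    (h : ¬ ∃ x ∈ K, x ∈ K' ∧ x ≠ v₁ ∧ x ≠ v₂) :
    Disjoint (cliqueEdgesErase K s(v₁, v₂)) (cliqueEdgesErase K' s(v₁, v₂)) := by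
  refine Finset.disjoint_left.2 fun e => ?_
  induction e with | _ u v =>
  rw [mk_mem_cliqueEdgesErase, mk_mem_cliqueEdgesErase]
  rintro ⟨⟨hu, hv⟩, huv, he⟩ ⟨⟨hu', hv'⟩, -, -⟩
  have h1 : u = v₁ ∨ u = v₂ := by grind
  have h2 : v = v₁ ∨ v = v₂ := by grind
  rcases h1 with rfl | rfl <;> rcases h2 with rfl | rfl <;> simp_all [Sym2.eq_swap]

/-- A clique on `r` vertices of an `r`-partite graph is transversal. -/
theorem exists_transversal {V : Type*} {r : ℕ} {G : SimpleGraph V} {Vs : Fin r → Set V}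
    (hcover : ∀ x : V, ∃ k, x ∈ Vs k) (hind : ∀ k, ∀ u ∈ Vs k, ∀ v ∈ Vs k, ¬ G.Adj u v)
    {K : Finset V} (hcard : K.card = r) (hK : ∀ u ∈ K, ∀ v ∈ K, u ≠ v → G.Adj u v) :
    ∃ f : Fin r → V, ∀ k, f k ∈ K ∧ f k ∈ Vs k := by
  choose cl hcl using hcover
  have hinj : Set.InjOn cl K := fun u hu v hv huv => by
    by_contra hne
    exact hind (cl u) u (hcl u) v (huv ▸ hcl v) (hK u hu v hv hne)
  have hsurj := Finset.surjOn_of_injOn_of_card_le (s := K) (t := Finset.univ) cl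
    (fun _ _ => by simp) hinj (by simp [hcard])
  have hex : ∀ k, ∃ x, x ∈ K ∧ x ∈ Vs k := fun k => by
    obtain ⟨x, hx, rfl⟩ := hsurj (Finset.mem_coe.2 (Finset.mem_univ k))
    exact ⟨x, hx, hcl x⟩
  choose f hf using hex
  exact ⟨f, hf⟩

theorem prod_cliqueEdgesErase {V : Type*} [DecidableEq V] {r : ℕ} {G : SimpleGraph V}
    {Vs : Fin r → Set V} (hdisj : ∀ k l, k ≠ l → Disjoint (Vs k) (Vs l))
    (hcover : ∀ x : V, ∃ k, x ∈ Vs k) (hind : ∀ k, ∀ u ∈ Vs k, ∀ v ∈ Vs k, ¬ G.Adj u v)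
    {i j : Fin r} {v₁ v₂ : V} (hv₁ : v₁ ∈ Vs i) (hv₂ : v₂ ∈ Vs j)
    {K : Finset V} (hcard : K.card = r) (hK : ∀ u ∈ K, ∀ v ∈ K, u ≠ v → G.Adj u v)
    (h₁ : v₁ ∈ K) (h₂ : v₂ ∈ K) {p : Sym2 (Fin r) → ℝ} {q : Sym2 V → ℝ}
    (hq : ∀ k l : Fin r, ∀ u ∈ Vs k, ∀ v ∈ Vs l, G.Adj u v → q s(u, v) = p s(k, l)) :
    ∏ e ∈ cliqueEdgesErase K s(v₁, v₂), q e =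
      ∏ e ∈ Finset.univ.filter (fun e : Sym2 (Fin r) => ¬ e.IsDiag ∧ e ≠ s(i, j)), p e := by
  obtain ⟨f, hf⟩ := exists_transversal hcover hind hcard hK
  have hclass : ∀ k, ∀ x ∈ K, x ∈ Vs k → f k = x := fun k x hx hxk => by
    by_contra hne
    exact hind k _ (hf k).2 x hxk (hK _ (hf k).1 x hx hne)
  have hinj : Function.Injective f := fun k l h => by
    by_contra hne
    exact Set.disjoint_left.1 (hdisj k l hne) (hf k).2 (h ▸ (hf l).2)
  have hinj' := Sym2.map.injective hinj
  have hbase : Sym2.map f s(i, j) = s(v₁, v₂) := by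
    rw [Sym2.map_mk, hclass i v₁ h₁ hv₁, hclass j v₂ h₂ hv₂]
  symm
  refine Finset.prod_bij (fun e _ => Sym2.map f e) ?_ (fun _ _ _ _ h => hinj' h) ?_ ?_
  · intro e he
    obtain ⟨-, hd, hne⟩ := Finset.mem_filter.1 he
    induction e with | _ k l =>
    have hmap := hinj'.ne hne
    rw [hbase, Sym2.map_mk] at hmap
    rw [Sym2.map_mk, mk_mem_cliqueEdgesErase]
    exact ⟨⟨(hf k).1, (hf l).1⟩, hinj.ne hd, hmap⟩
  · intro e he
    induction e with | _ u v =>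
    obtain ⟨⟨hu, hv⟩, huv, hne⟩ := mk_mem_cliqueEdgesErase.1 he
    obtain ⟨k, hk⟩ := hcover u
    obtain ⟨l, hl⟩ := hcover v
    have hmap : Sym2.map f s(k, l) = s(u, v) := by
      rw [Sym2.map_mk, hclass k u hu hk, hclass l v hv hl]
    refine ⟨s(k, l), Finset.mem_filter.2 ⟨Finset.mem_univ _, ?_, ?_⟩, hmap⟩
    · rw [Sym2.mk_isDiag_iff]
      rintro rfl
      exact huv ((hclass k u hu hk).symm.trans (hclass k v hv hl))
    · rintro h
      exact hne (by rw [← hmap, h, hbase])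
  · intro e he
    obtain ⟨-, hd, -⟩ := Finset.mem_filter.1 he
    induction e with | _ k l =>
    rw [Sym2.map_mk]
    exact (hq k l _ (hf k).2 _ (hf l).2 (hK _ (hf k).1 _ (hf l).1 (hinj.ne hd))).symm

theorem exists_two_mul_exp_neg_le {c γ : ℝ} (hc : 0 < c) (hγ : 0 < γ) :
    ∃ m₀ : ℕ, ∀ m : ℕ, m₀ ≤ m → ∀ x : ℝ, c * ((m : ℝ) + 1) ^ γ ≤ x →
      2 * Real.exp (-x) ≤ Real.exp (-(m : ℝ) ^ (γ / 2)) := by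
  have htend : Filter.Tendsto (fun m : ℕ => (m : ℝ) ^ (γ / 2)) Filter.atTop Filter.atTop :=
    (tendsto_rpow_atTop (half_pos hγ)).comp tendsto_natCast_atTop_atTop
  obtain ⟨m₀, hm₀⟩ := Filter.eventually_atTop.1 (htend.eventually_ge_atTop (max 1 (2 / c)))
  refine ⟨m₀, fun m hm x hx => ?_⟩
  set y : ℝ := (m : ℝ) ^ (γ / 2) with hy
  have hy1 : 1 ≤ y := (le_max_left _ _).trans (hm₀ m hm)
  have hy2 : 2 ≤ c * y := by
    have := (le_max_right _ _).trans (hm₀ m hm)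
    rwa [div_le_iff₀' hc] at this
  have hsq : y ^ 2 = (m : ℝ) ^ γ := by
    rw [hy, ← Real.rpow_natCast, ← Real.rpow_mul (Nat.cast_nonneg m)]
    congr 1
    push_cast
    ring
  have hmono : (m : ℝ) ^ γ ≤ ((m : ℝ) + 1) ^ γ :=
    Real.rpow_le_rpow (Nat.cast_nonneg m) (by linarith) hγ.le
  have hxy : 1 + y ≤ x := by nlinarith
  calc 2 * Real.exp (-x) ≤ Real.exp 1 * Real.exp (-x) := by
        gcongr
        linarith [Real.add_one_le_exp (1 : ℝ)]
    _ = Real.exp (1 - x) := by rw [← Real.exp_add, sub_eq_add_neg]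
    _ ≤ Real.exp (-y) := Real.exp_le_exp.2 (by linarith)

theorem stmt9 (r : ℕ) (hr : 3 ≤ r) (γ η : ℝ) (hγ : 0 < γ) (hη : 0 < η) :
    ∃ β : ℝ, 0 < β ∧ ∃ m₀ : ℕ, ∀ m : ℕ, m₀ ≤ m →
      ∀ (V : Type) [Fintype V] (G : SimpleGraph V) (Vs : Fin r → Set V),
        -- `G` is `r`-partite with classes `Vs 0, …, Vs (r-1)` of size `m` or `m+1`
        (∀ k l, k ≠ l → Disjoint (Vs k) (Vs l)) →
        (∀ x : V, ∃ k, x ∈ Vs k) →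
        (∀ k, ∀ u ∈ Vs k, ∀ v ∈ Vs k, ¬ G.Adj u v) →
        (∀ l, (Vs l).ncard = m ∨ (Vs l).ncard = m + 1) →
      -- `v₁v₂` is an edge between `V₁` and `V₂`
      ∀ v₁ v₂ : V, v₁ ∈ Vs ⟨0, by omega⟩ → v₂ ∈ Vs ⟨1, by omega⟩ → G.Adj v₁ v₂ →
      -- `𝒦` is a family of copies of `K_r` in `G`, each containing the edge `v₁v₂`
      ∀ 𝒦 : Finset (Finset V),
        (∀ K ∈ 𝒦, K.card = r ∧ (∀ u ∈ K, ∀ v ∈ K, u ≠ v → G.Adj u v) ∧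
          v₁ ∈ K ∧ v₂ ∈ K) →
      ∀ δ : ℝ, (𝒦.card : ℝ) = δ * (m : ℝ) ^ (r - 2) →
      -- the retention probabilities `p_{kl}`
      ∀ p : Sym2 (Fin r) → ℝ,
        (∀ k l : Fin r, k ≠ l → 0 < p s(k, l) ∧ p s(k, l) ≤ 1) →
      ∀ P : ℝ,
        P = ∏ e ∈ Finset.univ.filter (fun e : Sym2 (Fin r) =>
              ¬ e.IsDiag ∧ e ≠ s((⟨0, by omega⟩ : Fin r), (⟨1, by omega⟩ : Fin r))), p e →
        δ * (m : ℝ) ^ (r - 2) * P ≥ ((m : ℝ) + 1) ^ ((r : ℝ) - 3 + γ) →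
      -- `q` assigns to each edge of `G` the probability of its pair of classes
      ∀ q : Sym2 V → ℝ,
        (∀ k l : Fin r, ∀ u ∈ Vs k, ∀ v ∈ Vs l, G.Adj u v → q s(u, v) = p s(k, l)) →
      -- the number of copies from `𝒦` closed by `v₁v₂` in the random subgraph
      ∀ closedCount : Finset (Sym2 V) → ℕ,
        (∀ E' : Finset (Sym2 V), closedCount E' =
          {K | K ∈ 𝒦 ∧ cliqueEdges K \ {s(v₁, v₂)} ⊆ (E' : Set (Sym2 V))}.ncard) →
      edgeSubsetProb G q
        {E' | ¬ ((1 - η) * (P * δ * (m : ℝ) ^ (r - 2)) ≤ (closedCount E' : ℝ) ∧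
                 (closedCount E' : ℝ) ≤ (1 + η) * (P * δ * (m : ℝ) ^ (r - 2)))}
        ≤ Real.exp (-(m : ℝ) ^ β) := by
  classical
  set u : ℝ := min (η / 2) 1 with hu
  have hu0 : 0 < u := lt_min (half_pos hη) one_pos
  have hu1 : u ≤ 1 := min_le_right _ _
  have huη : u ≤ η / 2 := min_le_left _ _
  have hr0 : (0 : ℝ) < r := by
    exact_mod_cast (by omega : 0 < r)
  have huu : 0 < u * (η - u) := mul_pos hu0 (by linarith)
  obtain ⟨m₀, hm₀⟩ := exists_two_mul_exp_neg_le
    (c := u * (η - u) / (r * (r : ℝ) ^ (r - 3))) (by positivity) hγ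
  refine ⟨γ / 2, half_pos hγ, m₀, ?_⟩
  intro m hm V _ G Vs hdisj hcover hind hsize v₁ v₂ hv₁ hv₂ hadj 𝒦 h𝒦 δ hδ p hp P hP hbig q hq
    closedCount hclosed
  have hP0 : 0 ≤ P := by
    rw [hP]
    refine Finset.prod_nonneg fun e he => ?_
    obtain ⟨-, hd, -⟩ := Finset.mem_filter.1 he
    induction e with | _ k l =>
    exact (hp k l hd).1.le
  set S : Finset (Sym2 V) := (Set.toFinite G.edgeSet).toFinset with hS
  have hq01 : ∀ e ∈ S, 0 ≤ q e ∧ q e ≤ 1 := by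
    intro e he
    induction e with | _ a b =>
    have hab : G.Adj a b := by simpa [hS] using he
    obtain ⟨k, hk⟩ := hcover a
    obtain ⟨l, hl⟩ := hcover b
    have hkl : k ≠ l := by
      rintro rfl
      exact hind k a hk b hl hab
    rw [hq k l a hk b hl hab]
    exact ⟨(hp k l hkl).1.le, (hp k l hkl).2⟩
  set A : Finset V → Finset (Sym2 V) := fun K => cliqueEdgesErase K s(v₁, v₂) with hAdef
  have hA : ∀ K ∈ 𝒦, A K ⊆ S := by
    intro K hK e he
    induction e with | _ a b =>
    obtain ⟨⟨ha, hb⟩, hab, -⟩ := mk_mem_cliqueEdgesErase.1 he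
    simpa [hS] using (h𝒦 K hK).2.1 a ha b hb hab
  have hAP : ∀ K ∈ 𝒦, ∏ e ∈ A K, q e = P := by
    intro K hK
    obtain ⟨hcard, hadjK, h1, h2⟩ := h𝒦 K hK
    rw [hP]
    exact prod_cliqueEdgesErase hdisj hcover hind hv₁ hv₂ hcard hadjK h1 h2 hq
  have hV : Fintype.card V ≤ r * (m + 1) := by
    have hsub : (Finset.univ : Finset V) ⊆
        Finset.univ.biUnion fun k => (Set.toFinite (Vs k)).toFinset := fun x _ => by
      simpa using hcover x
    calc Fintype.card V = (Finset.univ : Finset V).card := Finset.card_univ.symm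
      _ ≤ _ := Finset.card_le_card hsub
      _ ≤ (Finset.univ : Finset (Fin r)).card * (m + 1) :=
          Finset.card_biUnion_le_card_mul _ _ _ fun k _ => by
            rw [← Set.ncard_eq_toFinset_card]
            rcases hsize k with h | h <;> omega
      _ = r * (m + 1) := by simp
  set D : ℕ := r * (r * (m + 1)) ^ (r - 3) with hDdef
  have hn : 0 < r * (m + 1) := Nat.mul_pos (by omega) (by omega)
  have hD : 0 < D := Nat.mul_pos (by omega) (pow_pos hn _)
  obtain ⟨c, hc, hcR⟩ := exists_greedy_coloring
    (fun K K' : Finset V => ∃ x ∈ K, x ∈ K' ∧ x ≠ v₁ ∧ x ≠ v₂)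
    (fun K K' ⟨x, h, h', hx⟩ => ⟨x, h', h, hx⟩) D 𝒦
    (card_meeting_elsewhere_lt hr hn hV hadj.ne 𝒦
      fun K hK => ⟨(h𝒦 K hK).1, (h𝒦 K hK).2.2⟩)
  have hcount : ∀ E, closedCount E = {K ∈ 𝒦 | A K ⊆ E}.card := by
    intro E
    rw [hclosed E, ← Set.ncard_coe_finset]
    congr 1
    ext K
    simp [hAdef, ← coe_cliqueEdgesErase]
  have hμ : P * δ * (m : ℝ) ^ (r - 2) = 𝒦.card * P := by rw [hδ]; ring
  have hdev := bernoulliExp_deviation_le hq01 𝒦 A hA hP0 hAP hD c hc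
    (fun K hK K' hK' hne h => disjoint_cliqueEdgesErase (hcR K hK K' hK' hne h))
    (η := η) hu0.le hu1
    {E' | ¬ ((1 - η) * (P * δ * (m : ℝ) ^ (r - 2)) ≤ (closedCount E' : ℝ) ∧
      (closedCount E' : ℝ) ≤ (1 + η) * (P * δ * (m : ℝ) ^ (r - 2)))} (by
      intro E hE
      rw [Set.mem_ofPred_eq, hμ, hcount, not_and_or, not_le, not_le] at hE
      exact hE.imp le_of_lt le_of_lt)
  have hexp : u * (η - u) / (r * (r : ℝ) ^ (r - 3)) * ((m : ℝ) + 1) ^ γ ≤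
      𝒦.card * P / D * (u * (η - u)) := by
    have hm1 : (0 : ℝ) < (m : ℝ) + 1 := by positivity
    have hpow : ((m : ℝ) + 1) ^ ((r : ℝ) - 3 + γ) =
        ((m : ℝ) + 1) ^ (r - 3) * ((m : ℝ) + 1) ^ γ := by
      rw [Real.rpow_add hm1, ← Real.rpow_natCast, Nat.cast_sub hr]
      norm_num
    rw [← hδ, hpow] at hbig
    have hDr : (D : ℝ) = r * (r : ℝ) ^ (r - 3) * ((m : ℝ) + 1) ^ (r - 3) := by
      rw [hDdef]
      push_cast
      rw [mul_pow, mul_assoc]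
    rw [div_mul_eq_mul_div, div_mul_eq_mul_div, hDr, div_le_div_iff₀ (by positivity) (by positivity)]
    calc _ = (u * (η - u) * (r * (r : ℝ) ^ (r - 3))) *
          (((m : ℝ) + 1) ^ (r - 3) * ((m : ℝ) + 1) ^ γ) := by ring
      _ ≤ (u * (η - u) * (r * (r : ℝ) ^ (r - 3))) * (𝒦.card * P) :=
          mul_le_mul_of_nonneg_left hbig (by positivity)
      _ = _ := by ring
  refine le_trans (le_of_eq ?_) (hdev.trans (hm₀ m hm _ hexp))
  unfold edgeSubsetProb bernoulliExp
  congr!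

end RainbowDecomp
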